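/- Let σ and τ be nonempty permutations with finest decompositions σ = σ₁ ⊕ ⋯ ⊕ σ_s and τ = τ₁ ⊕ ⋯ ⊕ τ_t with t ≥ 2 and τ₁ = 1. Let k ≥ 1 be the largest integer with τ₁ = ⋯ = τ_k = 1 and ℓ ≥ 0 the largest integer with σ₁ = ⋯ = σ_ℓ = 1. Then μ(σ,τ) = 0 if k−1 > ℓ; μ(σ,τ) = −μ(σ_{>k−1}, τ_{>k}) if k−1 = ℓ; and μ(σ,τ) = μ(σ_{>k}, τ_{>k}) − μ(σ_{>k−1}, τ_{>k}) if k−1 < ℓ. -/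

import Mathlib

open scoped Classical

/-- The set of all (finite) permutations, as patterns: a permutation of length `n`
together with its length. -/
abbrev PermPt := Σ n : ℕ, Equiv.Perm (Fin n)

/-- Pattern containment order: `σ` occurs in `τ` if there is a strictly monotone
choice of positions on which `τ` is order-isomorphic to `σ`. -/
def ple (σ τ : PermPt) : Prop :=
  ∃ f : Fin σ.1 → Fin τ.1, StrictMono f ∧
    ∀ a b : Fin σ.1, σ.2 a ≤ σ.2 b ↔ τ.2 (f a) ≤ τ.2 (f b)

/-- Strict pattern containment. -/
def plt (σ τ : PermPt) : Prop := ple σ τ ∧ ¬ ple τ σ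

/-- Direct sum of permutations. -/
def pds {m n : ℕ} (α : Equiv.Perm (Fin m)) (β : Equiv.Perm (Fin n)) :
    Equiv.Perm (Fin (m + n)) :=
  finSumFinEquiv.symm.trans ((Equiv.sumCongr α β).trans finSumFinEquiv)

/-- Skew sum of permutations. -/
def pss {m n : ℕ} (α : Equiv.Perm (Fin m)) (β : Equiv.Perm (Fin n)) :
    Equiv.Perm (Fin (m + n)) :=
  finSumFinEquiv.symm.trans
    (((Equiv.sumCongr α β).trans (Equiv.sumComm (Fin m) (Fin n))).trans
      (finSumFinEquiv.trans (finCongr (Nat.add_comm n m))))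

/-- Direct sum, as an operation on `PermPt`. -/
def pdsP (a b : PermPt) : PermPt := ⟨a.1 + b.1, pds a.2 b.2⟩

/-- Skew sum, as an operation on `PermPt`. -/
def pssP (a b : PermPt) : PermPt := ⟨a.1 + b.1, pss a.2 b.2⟩

/-- The empty permutation. -/
def pempty : PermPt := ⟨0, 1⟩

/-- The permutation `1` of length one. -/
def pone : PermPt := ⟨1, 1⟩

/-- A permutation is decomposable if it is the direct sum of two nonempty
permutations, i.e. some proper nonempty initial segment of positions is mapped
to the corresponding initial segment of values. -/
def Decomp {n : ℕ} (σ : Equiv.Perm (Fin n)) : Prop :=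
  ∃ m : ℕ, 0 < m ∧ m < n ∧ ∀ i : Fin n, (i : ℕ) < m → (σ i : ℕ) < m

/-- Disconnectedness of a set of permutations under pattern containment:
it splits into two nonempty parts with no comparabilities between them. -/
def Disconn (S : Set PermPt) : Prop :=
  ∃ A B : Set PermPt, A ∪ B = S ∧ A.Nonempty ∧ B.Nonempty ∧
    ∀ x ∈ A, ∀ y ∈ B, ¬ ple x y ∧ ¬ ple y x

/-- Direct sum of a list of permutations. -/
def psum (l : List PermPt) : PermPt := l.foldr pdsP pempty

/-- `mu` is the Möbius function of the pattern poset (including the empty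
permutation): `mu x x = 1`, `mu x z = 0` when `x ≰ z`, and the values of `mu`
on an interval `[x,z]` with `x < z` sum to zero. -/
def IsMobius (mu : PermPt → PermPt → ℤ) : Prop :=
  (∀ x : PermPt, mu x x = 1) ∧
  (∀ x z : PermPt, ¬ ple x z → mu x z = 0) ∧
  (∀ x z : PermPt, ple x z → x ≠ z →
    ∑ᶠ y ∈ {y : PermPt | ple x y ∧ ple y z}, mu x y = 0)

/-!
Prepending a component `1` to a permutation is an injective map `φ` of the pattern poset such that
the permutations below `φ b` are exactly those below `b` together with their images under `φ`.
Summing `μ(x, ·)` over the permutations below `φ b` therefore gives `∑ (μ(x, φ y) + μ(x, y))` over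
`y ≤ b`, where the second term is dropped if `y` itself begins with `1`. By Möbius inversion,
`μ(x, φ z) + [z does not begin with 1] μ(x, z)` is `μ(w, z)` if `x = φ w`, and `0` if `x` does not
begin with `1`. Repeated use of this identity cancels the common leading `1`s and settles the three
cases.
-/

section Order

open Finset IncidenceAlgebra

section SumIic

variable {α R : Type*} [PartialOrder α] [OrderBot α] [LocallyFiniteOrder α] [Ring R]

theorem eq_of_sum_Iic_eq {f g : α → R} (h : ∀ z, ∑ y ∈ Iic z, f y = ∑ y ∈ Iic z, g y) :
    f = g := by
  funext z
  rw [moebius_inversion_bot f _ (fun _ ↦ rfl), moebius_inversion_bot g _ h]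

theorem sum_Iic_mu [DecidableEq α] (x z : α) : ∑ y ∈ Iic z, mu R x y = if x = z then 1 else 0 := by
  rw [← sum_Icc_mu_right (𝕜 := R) x z]
  refine (sum_subset Icc_subset_Iic_self fun y hy hxy ↦ apply_eq_zero_of_not_le ?_ _).symm
  exact fun hle ↦ hxy (mem_Icc.2 ⟨hle, mem_Iic.1 hy⟩)

end SumIic

/-- An injective map `φ` such that the elements below `φ b` are the elements below `b` and their
images. It abstracts the map `σ ↦ 1 ⊕ σ` of the pattern poset. -/
structure IsIicDoubling {α : Type*} [LE α] (φ : α → α) : Prop where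
  injective : Function.Injective φ
  le_apply_iff {y b : α} : y ≤ φ b ↔ y ≤ b ∨ ∃ a ≤ b, φ a = y

namespace IsIicDoubling

variable {α R : Type*} [PartialOrder α] [OrderBot α] [LocallyFiniteOrder α] [Ring R]
  {φ : α → α} {x : α}

theorem Iic_apply [DecidableEq α] (hφ : IsIicDoubling φ) (b : α) :
    Iic (φ b) = {y ∈ Iic b | y ∉ Set.range φ} ∪ (Iic b).image φ := by
  ext y
  simp only [mem_union, mem_filter, mem_image, mem_Iic, hφ.le_apply_iff]
  refine ⟨?_, Or.imp_left And.left⟩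
  rintro (hy | hy)
  · by_cases hmem : y ∈ Set.range φ
    · obtain ⟨w, rfl⟩ := hmem
      exact .inr ⟨w, (hφ.le_apply_iff.2 (.inl le_rfl)).trans hy, rfl⟩
    · exact .inl ⟨hy, hmem⟩
  · exact .inr hy

theorem sum_Iic_apply {M : Type*} [AddCommMonoid M] (hφ : IsIicDoubling φ) (f : α → M) (b : α) :
    ∑ y ∈ Iic (φ b), f y = ∑ y ∈ Iic b, (f (φ y) + if y ∈ Set.range φ then 0 else f y) := by
  have hdisj : Disjoint {y ∈ Iic b | y ∉ Set.range φ} ((Iic b).image φ) := by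
    simp only [disjoint_left, mem_filter, mem_image]
    rintro _ ⟨-, hy⟩ ⟨w, -, rfl⟩
    exact hy ⟨w, rfl⟩
  rw [hφ.Iic_apply, sum_union hdisj, sum_image hφ.injective.injOn, sum_filter, sum_add_distrib,
    add_comm]
  simp only [ite_not]

variable [DecidableEq α]

theorem mu_apply_apply (hφ : IsIicDoubling φ) (x z : α) :
    mu R (φ x) (φ z) = mu R x z - if z ∈ Set.range φ then 0 else mu R (φ x) z := by
  have heq : (fun z ↦ mu R (φ x) (φ z) + if z ∈ Set.range φ then 0 else mu R (φ x) z) =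
      mu R x := eq_of_sum_Iic_eq fun b ↦ by
    rw [← hφ.sum_Iic_apply, sum_Iic_mu, sum_Iic_mu]
    simp only [hφ.injective.eq_iff]
  exact eq_sub_of_add_eq (congrFun heq z)

theorem mu_apply_of_notMem_range (hφ : IsIicDoubling φ) (hx : x ∉ Set.range φ) (z : α) :
    mu R x (φ z) = -if z ∈ Set.range φ then 0 else mu R x z := by
  have heq : (fun z ↦ mu R x (φ z) + if z ∈ Set.range φ then 0 else mu R x z) = 0 :=
    eq_of_sum_Iic_eq fun b ↦ by
      rw [← hφ.sum_Iic_apply, sum_Iic_mu, if_neg fun h ↦ hx ⟨b, h.symm⟩]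
      simp only [Pi.zero_apply, sum_const_zero]
  exact eq_neg_of_add_eq_zero_left (congrFun heq z)

theorem mu_iterate_apply (hφ : IsIicDoubling φ) (n : ℕ) (x z : α) :
    mu R (φ^[n] x) (φ^[n] (φ z)) = mu R x (φ z) := by
  induction n with
  | zero => rfl
  | succ n ih =>
    have hmem : φ^[n] (φ z) ∈ Set.range φ :=
      ⟨φ^[n] z, (Function.Commute.iterate_self φ n z).symm⟩
    rw [Function.iterate_succ_apply', Function.iterate_succ_apply', hφ.mu_apply_apply,
      if_pos hmem, sub_zero, ih]

end IsIicDoubling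

end Order

section PatternPoset

/-- An occurrence of the pattern `σ` in `τ`, given by the positions `f`; it names the witnesses of
`ple`. -/
structure IsOccurrence {m n : ℕ} (σ : Equiv.Perm (Fin m)) (τ : Equiv.Perm (Fin n))
    (f : Fin m → Fin n) : Prop where
  strictMono : StrictMono f
  le_iff_le (i j : Fin m) : σ i ≤ σ j ↔ τ (f i) ≤ τ (f j)

theorem ple_iff_exists_isOccurrence {x y : PermPt} :
    ple x y ↔ ∃ f, IsOccurrence x.2 y.2 f :=
  exists_congr fun _ ↦ ⟨fun h ↦ ⟨h.1, h.2⟩, fun h ↦ ⟨h.1, h.2⟩⟩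

theorem equiv_eq_of_le_iff_le {α β : Type*} [LinearOrder β] [Finite β] {σ τ : α ≃ β}
    (h : ∀ a b, σ a ≤ σ b ↔ τ a ≤ τ b) : σ = τ := by
  have hmono : StrictMono (τ ∘ σ.symm) := fun a b hab ↦ by
    simpa only [Function.comp_apply, ← not_le, ← h, Equiv.apply_symm_apply] using hab
  ext a
  simpa only [Function.comp_apply, Equiv.symm_apply_apply, id] using
    (congrFun hmono.eq_id (σ a)).symm

theorem ple_refl (x : PermPt) : ple x x := ⟨id, strictMono_id, fun _ _ ↦ Iff.rfl⟩

theorem ple_trans {x y z : PermPt} : ple x y → ple y z → ple x z := by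
  rintro ⟨f, hf, hfle⟩ ⟨g, hg, hgle⟩
  exact ⟨g ∘ f, hg.comp hf, fun a b ↦ (hfle a b).trans (hgle _ _)⟩

theorem length_le_of_ple {x y : PermPt} : ple x y → x.1 ≤ y.1 := by
  rintro ⟨f, hf, -⟩
  simpa only [Fintype.card_fin] using Fintype.card_le_of_injective f hf.injective

theorem ple_antisymm {x y : PermPt} (hxy : ple x y) (hyx : ple y x) : x = y := by
  have hlen := (length_le_of_ple hxy).antisymm (length_le_of_ple hyx)
  obtain ⟨n, σ⟩ := x
  obtain ⟨m, τ⟩ := y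
  obtain rfl : n = m := hlen
  obtain ⟨f, hf, hfle⟩ := hxy
  obtain rfl := hf.eq_id
  exact congrArg (Sigma.mk n) (equiv_eq_of_le_iff_le hfle)

instance : PartialOrder PermPt where
  le := ple
  le_refl := ple_refl
  le_trans _ _ _ := ple_trans
  le_antisymm _ _ := ple_antisymm

instance : OrderBot PermPt where
  bot := pempty
  bot_le _ := ⟨Fin.elim0, fun a ↦ a.elim0, fun a ↦ a.elim0⟩

theorem finite_Iic_permPt (z : PermPt) : (Set.Iic z).Finite := by
  have hfin : (Set.range fun p : Σ n : Fin (z.1 + 1), Equiv.Perm (Fin n) ↦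
      (⟨p.1, p.2⟩ : PermPt)).Finite := Set.finite_range _
  exact hfin.subset fun y hy ↦ ⟨⟨⟨y.1, Nat.lt_succ_of_le (length_le_of_ple hy)⟩, y.2⟩, rfl⟩

noncomputable instance : LocallyFiniteOrder PermPt :=
  .ofFiniteIcc fun _ b ↦ (finite_Iic_permPt b).subset Set.Icc_subset_Iic_self

theorem IsMobius.eq_mu {mu : PermPt → PermPt → ℤ} (hmu : IsMobius mu) :
    mu = IncidenceAlgebra.mu ℤ := by
  obtain ⟨hrefl, hzero, hsum⟩ := hmu
  let f : IncidenceAlgebra ℤ PermPt := ⟨mu, hzero⟩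
  suffices hf : f * IncidenceAlgebra.zeta ℤ = (1 : IncidenceAlgebra ℤ PermPt) from
    congrArg DFunLike.coe (left_inv_eq_right_inv hf IncidenceAlgebra.zeta_mul_mu)
  ext x z hxz
  have hsum_Icc : (f * IncidenceAlgebra.zeta ℤ : IncidenceAlgebra ℤ PermPt) x z =
      ∑ y ∈ Finset.Icc x z, mu x y := by
    rw [IncidenceAlgebra.mul_apply]
    refine Finset.sum_congr rfl fun y hy ↦ ?_
    rw [IncidenceAlgebra.zeta_of_le (Finset.mem_Icc.1 hy).2, mul_one]
    rfl
  rw [hsum_Icc, IncidenceAlgebra.one_apply]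
  split_ifs with h
  · rw [h, Finset.Icc_self, Finset.sum_singleton, hrefl]
  · rw [← hsum x z hxz h, ← finsum_mem_coe_finset, Finset.coe_Icc]
    rfl

end PatternPoset

section OneSum

open Equiv.Perm (decomposeFin)

variable {m n : ℕ} {σ : Equiv.Perm (Fin m)} {τ : Equiv.Perm (Fin n)}

/-- The direct sum `1 ⊕ σ`, on `Fin (n + 1)` rather than on `Fin (1 + n)` as in `pds 1 σ`, so that
positions and values are `0` or of the form `i.succ`. -/
def consZero (σ : Equiv.Perm (Fin n)) : Equiv.Perm (Fin (n + 1)) := decomposeFin.symm (0, σ)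

theorem consZero_zero (σ : Equiv.Perm (Fin n)) : consZero σ 0 = 0 :=
  Equiv.Perm.decomposeFin_symm_apply_zero 0 σ

theorem consZero_succ (σ : Equiv.Perm (Fin n)) (i : Fin n) : consZero σ i.succ = (σ i).succ := by
  rw [consZero, Equiv.Perm.decomposeFin_symm_apply_succ, Equiv.swap_self, Equiv.refl_apply]

theorem consZero_injective : Function.Injective (consZero (n := n)) :=
  decomposeFin.symm.injective.comp (Prod.mk_right_injective 0)

theorem exists_consZero_eq {σ : Equiv.Perm (Fin (n + 1))} (h : σ 0 = 0) :
    ∃ ρ, consZero ρ = σ := by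
  obtain ⟨⟨p, ρ⟩, rfl⟩ := decomposeFin.symm.surjective σ
  obtain rfl : p = 0 := by simpa only [Equiv.Perm.decomposeFin_symm_apply_zero] using h
  exact ⟨ρ, rfl⟩

theorem IsOccurrence.cons {f : Fin m → Fin n} (h : IsOccurrence σ τ f) :
    IsOccurrence (consZero σ) (consZero τ) (Fin.cons 0 (Fin.succ ∘ f)) where
  strictMono i j := by
    cases i using Fin.cases <;> cases j using Fin.cases <;> simp [h.strictMono.lt_iff_lt]
  le_iff_le i j := by
    cases i using Fin.cases <;> cases j using Fin.cases <;>
      simp [consZero_zero, consZero_succ, h.le_iff_le]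

theorem isOccurrence_consZero_succ_comp {f : Fin m → Fin n} :
    IsOccurrence σ (consZero τ) (Fin.succ ∘ f) ↔ IsOccurrence σ τ f := by
  have hle (i j : Fin m) : consZero τ ((Fin.succ ∘ f) i) ≤ consZero τ ((Fin.succ ∘ f) j) ↔
      τ (f i) ≤ τ (f j) := by
    rw [Function.comp_apply, Function.comp_apply, consZero_succ, consZero_succ,
      Fin.succ_le_succ_iff]
  exact ⟨fun h ↦ ⟨fun _ _ hij ↦ Fin.succ_lt_succ_iff.1 (h.strictMono hij),
      fun i j ↦ (h.le_iff_le i j).trans (hle i j)⟩,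
    fun h ↦ ⟨Fin.strictMono_succ.comp h.strictMono,
      fun i j ↦ (h.le_iff_le i j).trans (hle i j).symm⟩⟩

theorem IsOccurrence.exists_of_ne_zero {f : Fin m → Fin (n + 1)}
    (h : IsOccurrence σ (consZero τ) f) (hne : ∀ i, f i ≠ 0) : ∃ g, IsOccurrence σ τ g := by
  choose g hg using fun i ↦ Fin.exists_succ_eq_of_ne_zero (hne i)
  obtain rfl : Fin.succ ∘ g = f := funext hg
  exact ⟨g, isOccurrence_consZero_succ_comp.1 h⟩

theorem IsOccurrence.exists_of_consZero {f : Fin (m + 1) → Fin (n + 1)}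
    (h : IsOccurrence (consZero σ) (consZero τ) f) : ∃ g, IsOccurrence σ τ g := by
  have hcomp : IsOccurrence σ (consZero τ) (f ∘ Fin.succ) :=
    ⟨h.strictMono.comp Fin.strictMono_succ, fun i j ↦ by
      rw [Function.comp_apply, Function.comp_apply, ← h.le_iff_le, consZero_succ, consZero_succ,
        Fin.succ_le_succ_iff]⟩
  exact hcomp.exists_of_ne_zero fun i ↦
    ((Fin.zero_le _).trans_lt (h.strictMono i.succ_pos)).ne'

theorem IsOccurrence.apply_zero_of_apply_eq_zero {σ : Equiv.Perm (Fin (m + 1))}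
    {f : Fin (m + 1) → Fin (n + 1)} (h : IsOccurrence σ (consZero τ) f) (hf : f 0 = 0) :
    σ 0 = 0 := by
  have hmin : σ 0 ≤ σ (σ.symm 0) := by
    rw [h.le_iff_le, hf, consZero_zero]
    exact Fin.zero_le _
  rwa [Equiv.apply_symm_apply, Fin.le_zero_iff] at hmin

/-- The direct sum `1 ⊕ x` on `PermPt`, with the length `x.1 + 1` of `consZero`. -/
def oneSum (x : PermPt) : PermPt := ⟨x.1 + 1, consZero x.2⟩

theorem oneSum_injective : Function.Injective oneSum := by
  rintro ⟨m, σ⟩ ⟨n, τ⟩ h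
  obtain rfl : m = n := Nat.succ.inj (congrArg Sigma.fst h)
  exact congrArg (Sigma.mk m) (consZero_injective (eq_of_heq (Sigma.mk.inj h).2))

theorem le_oneSum (x : PermPt) : x ≤ oneSum x :=
  ple_iff_exists_isOccurrence.2
    ⟨Fin.succ ∘ id, isOccurrence_consZero_succ_comp.2 ⟨strictMono_id, fun _ _ ↦ Iff.rfl⟩⟩

theorem oneSum_le_oneSum {a b : PermPt} : oneSum a ≤ oneSum b ↔ a ≤ b := by
  refine ple_iff_exists_isOccurrence.trans (Iff.trans ?_ ple_iff_exists_isOccurrence.symm)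
  exact ⟨fun ⟨_, h⟩ ↦ h.exists_of_consZero, fun ⟨_, h⟩ ↦ ⟨_, h.cons⟩⟩

theorem le_or_mem_range_of_le_oneSum {y b : PermPt} (h : y ≤ oneSum b) :
    y ≤ b ∨ y ∈ Set.range oneSum := by
  obtain ⟨n, σ⟩ := y
  obtain ⟨f, hf⟩ := ple_iff_exists_isOccurrence.1 h
  change Fin n → Fin (b.1 + 1) at f
  by_cases hne : ∀ i, f i ≠ 0
  · exact .inl (ple_iff_exists_isOccurrence.2 (hf.exists_of_ne_zero hne))
  · push Not at hne
    obtain ⟨i, hi⟩ := hne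
    obtain _ | n := n
    · exact i.elim0
    have hf0 : f 0 = 0 := Fin.le_zero_iff.1 (hi ▸ hf.strictMono.monotone i.zero_le)
    obtain ⟨ρ, rfl⟩ := exists_consZero_eq (hf.apply_zero_of_apply_eq_zero hf0)
    exact .inr ⟨⟨n, ρ⟩, rfl⟩

theorem isIicDoubling_oneSum : IsIicDoubling oneSum where
  injective := oneSum_injective
  le_apply_iff {y b} := by
    constructor
    · intro hy
      refine (le_or_mem_range_of_le_oneSum hy).imp_right ?_
      rintro ⟨a, rfl⟩
      exact ⟨a, oneSum_le_oneSum.1 hy, rfl⟩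
    · rintro (hy | ⟨a, ha, rfl⟩)
      · exact hy.trans (le_oneSum b)
      · exact oneSum_le_oneSum.2 ha

end OneSum

section DirectSum

theorem pds_castAdd {m n : ℕ} (α : Equiv.Perm (Fin m)) (β : Equiv.Perm (Fin n)) (i : Fin m) :
    pds α β (i.castAdd n) = (α i).castAdd n := by
  simp only [pds, Equiv.trans_apply, finSumFinEquiv_symm_apply_castAdd, Equiv.sumCongr_apply,
    Sum.map_inl, finSumFinEquiv_apply_left]

theorem pds_natAdd {m n : ℕ} (α : Equiv.Perm (Fin m)) (β : Equiv.Perm (Fin n)) (i : Fin n) :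
    pds α β (i.natAdd m) = (β i).natAdd m := by
  simp only [pds, Equiv.trans_apply, finSumFinEquiv_symm_apply_natAdd, Equiv.sumCongr_apply,
    Sum.map_inr, finSumFinEquiv_apply_right]

theorem permPt_ext {x y : PermPt} (hlen : x.1 = y.1)
    (hval : ∀ i : Fin x.1, (x.2 i : ℕ) = y.2 (i.cast hlen)) : x = y := by
  obtain ⟨n, σ⟩ := x
  obtain ⟨m, τ⟩ := y
  obtain rfl : n = m := hlen
  exact congrArg (Sigma.mk n) (Equiv.ext fun i ↦ Fin.ext (hval i))

theorem pdsP_pone (x : PermPt) : pdsP pone x = oneSum x := by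
  refine permPt_ext (Nat.add_comm 1 x.1) fun i ↦ ?_
  change Fin (1 + x.1) at i
  cases i using Fin.addCases with
  | left i =>
    obtain rfl := Subsingleton.elim i 0
    calc (pds 1 x.2 (Fin.castAdd x.1 0) : ℕ) = 0 := by rw [pds_castAdd]; rfl
      _ = (consZero x.2 0 : ℕ) := by rw [consZero_zero]; rfl
  | right i =>
    calc (pds 1 x.2 (i.natAdd 1) : ℕ) = 1 + x.2 i := by rw [pds_natAdd]; rfl
      _ = (consZero x.2 i.succ : ℕ) := by rw [consZero_succ, Fin.val_succ, Nat.add_comm]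
      _ = consZero x.2 ((i.natAdd 1).cast (Nat.add_comm 1 x.1)) := by rw [Fin.cast_natAdd]; rfl

theorem psum_pone_cons (l : List PermPt) : psum (pone :: l) = oneSum (psum l) :=
  pdsP_pone (psum l)

theorem replicate_prefix_ofFn {α : Type*} {s n : ℕ} {f : Fin s → α} {a : α} (hn : n ≤ s)
    (h : ∀ i : Fin s, (i : ℕ) < n → f i = a) : List.replicate n a <+: List.ofFn f := by
  rw [List.prefix_iff_getElem]
  refine ⟨by simpa only [List.length_replicate, List.length_ofFn] using hn, fun i hi ↦ ?_⟩
  rw [List.getElem_replicate, List.getElem_ofFn]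
  exact (h _ (by simpa only [List.length_replicate] using hi)).symm

theorem psum_drop_eq_oneSum {l : List PermPt} {n i : ℕ} (h : List.replicate n pone <+: l)
    (hi : i < n) : psum (l.drop i) = oneSum (psum (l.drop (i + 1))) := by
  have hi' : i < (List.replicate n pone).length := by rwa [List.length_replicate]
  have hget : l[i]'(hi'.trans_le h.length_le) = pone := by
    rw [← h.getElem hi', List.getElem_replicate]
  rw [List.drop_eq_getElem_cons (hi'.trans_le h.length_le), hget, psum_pone_cons]

theorem psum_eq_iterate_oneSum {l : List PermPt} {n i : ℕ} (h : List.replicate n pone <+: l)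
    (hi : i ≤ n) : psum l = oneSum^[i] (psum (l.drop i)) := by
  induction i with
  | zero => rfl
  | succ i ih =>
    rw [Function.iterate_succ_apply, ← psum_drop_eq_oneSum h hi]
    exact ih (Nat.le_of_succ_le hi)

theorem mu_psum_drop {l l' : List PermPt} {n n' i : ℕ} (h : List.replicate n pone <+: l)
    (h' : List.replicate n' pone <+: l') (hi : i ≤ n) (hi' : i < n') :
    IncidenceAlgebra.mu ℤ (psum (l.drop i)) (psum (l'.drop i)) =
      IncidenceAlgebra.mu ℤ (psum l) (psum l') := by
  rw [psum_eq_iterate_oneSum h hi, psum_eq_iterate_oneSum h' hi'.le, psum_drop_eq_oneSum h' hi',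
    isIicDoubling_oneSum.mu_iterate_apply]

theorem eq_pone_of_not_decomp {c : PermPt} (hpos : 0 < c.1) (hindec : ¬ Decomp c.2)
    (h0 : (c.2 ⟨0, hpos⟩ : ℕ) = 0) : c = pone := by
  obtain ⟨_ | _ | n, σ⟩ := c
  · exact absurd hpos (lt_irrefl 0)
  · exact congrArg (Sigma.mk 1) (Subsingleton.elim (α := Equiv.Perm (Fin 1)) σ 1)
  · refine absurd ⟨1, one_pos, by simp, fun i hi ↦ ?_⟩ hindec
    obtain rfl : i = ⟨0, hpos⟩ := Fin.ext (Nat.lt_one_iff.1 hi)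
    exact h0.trans_lt one_pos

theorem psum_cons_notMem_range_oneSum {c : PermPt} (l : List PermPt) (hpos : 0 < c.1)
    (hindec : ¬ Decomp c.2) (hc : c ≠ pone) : psum (c :: l) ∉ Set.range oneSum := by
  rintro ⟨x, hx⟩
  have hzero : ∀ y : PermPt, oneSum x = y → ∀ h : 0 < y.1, (y.2 ⟨0, h⟩ : ℕ) = 0 := by
    rintro _ rfl _
    exact congrArg Fin.val (consZero_zero x.2)
  refine hc (eq_pone_of_not_decomp hpos hindec ?_)
  calc (c.2 ⟨0, hpos⟩ : ℕ) = (psum (c :: l)).2 ⟨0, Nat.add_pos_left hpos _⟩ :=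
        (congrArg Fin.val (pds_castAdd c.2 (psum l).2 ⟨0, hpos⟩)).symm
    _ = 0 := hzero _ hx _

theorem psum_drop_notMem_range_oneSum {l : List PermPt} (hl : ∀ c ∈ l, 0 < c.1 ∧ ¬ Decomp c.2)
    {n : ℕ} (hn : ∀ h : n < l.length, l[n] ≠ pone) : psum (l.drop n) ∉ Set.range oneSum := by
  rcases lt_or_ge n l.length with h | h
  · obtain ⟨hpos, hindec⟩ := hl _ (List.getElem_mem h)
    rw [List.drop_eq_getElem_cons h]
    exact psum_cons_notMem_range_oneSum _ hpos hindec (hn h)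
  · rw [List.drop_eq_nil_of_le h]
    rintro ⟨x, hx⟩
    exact Nat.succ_ne_zero _ (congrArg Sigma.fst hx)

end DirectSum

/-- Proposition 1 of Burstein–Jelínek–Jelínková–Steingrímsson: the Möbius
function `μ(σ,τ)` when the finest decomposition of `τ` begins with `τ₁ = 1`,
where `k` is the number of leading components of `τ` equal to `1` and `ℓ` the
number of leading components of `σ` equal to `1`. -/
theorem mobius_tau_one_first (mu : PermPt → PermPt → ℤ) (hmu : IsMobius mu)
    (s t : ℕ) (hs : 1 ≤ s) (ht : 2 ≤ t)
    (σf : Fin s → PermPt) (τf : Fin t → PermPt)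
    (hσcomp : ∀ m : Fin s, 0 < (σf m).1 ∧ ¬ Decomp (σf m).2)
    (hτcomp : ∀ m : Fin t, 0 < (τf m).1 ∧ ¬ Decomp (τf m).2)
    (σ τ : PermPt)
    (hσ : σ = psum (List.ofFn σf)) (hτ : τ = psum (List.ofFn τf))
    (hτ1 : τf ⟨0, by omega⟩ = pone)
    (k : ℕ) (hk1 : 1 ≤ k) (hk2 : k ≤ t)
    (hk3 : ∀ i : Fin t, (i : ℕ) < k → τf i = pone)
    (hk4 : ∀ h : k < t, τf ⟨k, h⟩ ≠ pone)
    (ℓ : ℕ) (hl2 : ℓ ≤ s)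
    (hl3 : ∀ i : Fin s, (i : ℕ) < ℓ → σf i = pone)
    (hl4 : ∀ h : ℓ < s, σf ⟨ℓ, h⟩ ≠ pone) :
    (ℓ < k - 1 → mu σ τ = 0) ∧
    (k - 1 = ℓ → mu σ τ =
      - mu (psum ((List.ofFn σf).drop (k - 1))) (psum ((List.ofFn τf).drop k))) ∧
    (k - 1 < ℓ → mu σ τ =
      mu (psum ((List.ofFn σf).drop k)) (psum ((List.ofFn τf).drop k))
        - mu (psum ((List.ofFn σf).drop (k - 1)))
            (psum ((List.ofFn τf).drop k))) := by
  subst hσ hτ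
  obtain rfl := hmu.eq_mu
  obtain ⟨k, rfl⟩ := Nat.exists_eq_add_of_le' hk1
  rw [Nat.add_sub_cancel]
  have hφ := isIicDoubling_oneSum
  have hσ_ones := replicate_prefix_ofFn hl2 hl3
  have hτ_ones := replicate_prefix_ofFn hk2 hk3
  have hσ_rest : psum ((List.ofFn σf).drop ℓ) ∉ Set.range oneSum :=
    psum_drop_notMem_range_oneSum (List.forall_mem_ofFn_iff.2 hσcomp) (by simpa using hl4)
  have hτ_rest : psum ((List.ofFn τf).drop (k + 1)) ∉ Set.range oneSum :=
    psum_drop_notMem_range_oneSum (List.forall_mem_ofFn_iff.2 hτcomp) (by simpa using hk4)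
  refine ⟨fun hℓk ↦ ?_, fun hkℓ ↦ ?_, fun hkℓ ↦ ?_⟩
  · have hτ_next : psum ((List.ofFn τf).drop (ℓ + 1)) ∈ Set.range oneSum :=
      ⟨_, (psum_drop_eq_oneSum hτ_ones (Nat.succ_lt_succ hℓk)).symm⟩
    have hℓk' := Nat.lt_succ_of_lt hℓk
    rw [← mu_psum_drop hσ_ones hτ_ones le_rfl hℓk', psum_drop_eq_oneSum hτ_ones hℓk',
      hφ.mu_apply_of_notMem_range hσ_rest, if_pos hτ_next, neg_zero]
  · subst hkℓ
    rw [← mu_psum_drop hσ_ones hτ_ones le_rfl k.lt_succ_self,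
      psum_drop_eq_oneSum hτ_ones k.lt_succ_self, hφ.mu_apply_of_notMem_range hσ_rest,
      if_neg hτ_rest]
  · rw [← mu_psum_drop hσ_ones hτ_ones hkℓ.le k.lt_succ_self,
      psum_drop_eq_oneSum hτ_ones k.lt_succ_self, psum_drop_eq_oneSum hσ_ones hkℓ,
      hφ.mu_apply_apply, if_neg hτ_rest]
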